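/- Fix y ∈ ℝ^d and real numbers α₁ ≤ α₂, and suppose that (L̂ U)(z,y) + b_x(z,y)U(z,y) + c_x(z,y) = 0 for every z ∈ [α₁, α₂]. For β ∈ ℝ define λ(y;β) := c(β,y) + U(β,y)b(β,y) + (1/2)σ(β,y)²U_x(β,y) + σ(β,y)Σ_i (ρζ)_i(y)U_{y_i}(β,y). Then λ(y;α₂) − λ(y;α₁) = −∫_{α₁}^{α₂} [ Σ_i η_i(y)U_{y_i}(z,y) + (1/2)Σ_{i,j} a_{ij}(y)U_{y_i y_j}(z,y) ] dz. -/

import Mathlib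

open MeasureTheory

/-- Partial derivative in the first (scalar) variable. -/
noncomputable def pdx {d : ℕ} (f : ℝ × (Fin d → ℝ) → ℝ) (p : ℝ × (Fin d → ℝ)) : ℝ :=
  deriv (fun x => f (x, p.2)) p.1

/-- Partial derivative in the `i`-th coordinate of the second variable. -/
noncomputable def pdy {d : ℕ} (i : Fin d) (f : ℝ × (Fin d → ℝ) → ℝ) (p : ℝ × (Fin d → ℝ)) : ℝ :=
  deriv (fun t => f (p.1, Function.update p.2 i t)) (p.2 i)

/-- `(ρζ)_i(y) = ∑_j ρ_j ζ_{ij}(y)`. -/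
noncomputable def rzeta {d : ℕ} (ζ : (Fin d → ℝ) → Fin d → Fin d → ℝ) (ρ : Fin d → ℝ)
    (y : Fin d → ℝ) (i : Fin d) : ℝ := ∑ j, ρ j * ζ y i j

/-- `a(y) = ζ(y) ζ(y)ᵀ`. -/
noncomputable def amat {d : ℕ} (ζ : (Fin d → ℝ) → Fin d → Fin d → ℝ)
    (y : Fin d → ℝ) (i j : Fin d) : ℝ := ∑ k, ζ y i k * ζ y j k

/-- The generator `L̂` of the auxiliary process `(X̂, Ŷ)`, applied to `U`. -/
noncomputable def genHat {d : ℕ} (b σ' : ℝ × (Fin d → ℝ) → ℝ)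
    (η : (Fin d → ℝ) → Fin d → ℝ) (ζ : (Fin d → ℝ) → Fin d → Fin d → ℝ) (ρ : Fin d → ℝ)
    (U : ℝ × (Fin d → ℝ) → ℝ) (p : ℝ × (Fin d → ℝ)) : ℝ :=
  (b p + σ' p * pdx σ' p) * pdx U p
    + (1 / 2) * (σ' p) ^ 2 * pdx (pdx U) p
    + ∑ i, (η p.2 i + pdx σ' p * rzeta ζ ρ p.2 i) * pdy i U p
    + (1 / 2) * ∑ i, ∑ j, amat ζ p.2 i j * pdy i (pdy j U) p
    + σ' p * ∑ i, rzeta ζ ρ p.2 i * pdy i (pdx U) p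

/-- The generator `L` of the uncontrolled process `(X⁰, Y)`, applied to `V`. -/
noncomputable def gen {d : ℕ} (b σ' : ℝ × (Fin d → ℝ) → ℝ)
    (η : (Fin d → ℝ) → Fin d → ℝ) (ζ : (Fin d → ℝ) → Fin d → Fin d → ℝ) (ρ : Fin d → ℝ)
    (V : ℝ × (Fin d → ℝ) → ℝ) (p : ℝ × (Fin d → ℝ)) : ℝ :=
  b p * pdx V p
    + (1 / 2) * (σ' p) ^ 2 * pdx (pdx V) p
    + ∑ i, η p.2 i * pdy i V p
    + (1 / 2) * ∑ i, ∑ j, amat ζ p.2 i j * pdy i (pdy j V) p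
    + σ' p * ∑ i, rzeta ζ ρ p.2 i * pdy i (pdx V) p


theorem pdx_hasDerivAt {d : ℕ} {f : ℝ × (Fin d → ℝ) → ℝ} (hf : Differentiable ℝ f)
    (z : ℝ) (y : Fin d → ℝ) :
    HasDerivAt (fun x => f (x, y)) (fderiv ℝ f (z, y) (1, 0)) z := by
  have h := (hf (z, y)).hasFDerivAt.comp_hasDerivAt (f := fun x : ℝ => (x, y)) z
    ((hasDerivAt_id z).prodMk (hasDerivAt_const z y))
  exact h

theorem pdx_eq {d : ℕ} {f : ℝ × (Fin d → ℝ) → ℝ} (hf : Differentiable ℝ f) :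
    pdx f = fun p => fderiv ℝ f p (1, 0) := by
  funext p
  exact (pdx_hasDerivAt hf p.1 p.2).deriv

theorem pdx_hasDerivAt' {d : ℕ} {f : ℝ × (Fin d → ℝ) → ℝ} (hf : Differentiable ℝ f)
    (z : ℝ) (y : Fin d → ℝ) :
    HasDerivAt (fun x => f (x, y)) (pdx f (z, y)) z := by
  rw [pdx_eq hf]
  exact pdx_hasDerivAt hf z y

theorem pdy_eq {d : ℕ} (i : Fin d) {f : ℝ × (Fin d → ℝ) → ℝ} (hf : Differentiable ℝ f) :
    pdy i f = fun p => fderiv ℝ f p (0, Pi.single i 1) := by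
  funext p
  have hp : p = (p.1, Function.update p.2 i (p.2 i)) := by simp
  have h := HasFDerivAt.comp_hasDerivAt (l := f) (l' := fderiv ℝ f p)
    (f := fun t : ℝ => (p.1, Function.update p.2 i t)) (p.2 i)
    (by rw [← hp]; exact (hf p).hasFDerivAt)
    ((hasDerivAt_const (p.2 i) p.1).prodMk (hasDerivAt_update p.2 i (p.2 i)))
  exact h.deriv

theorem pd_contDiff {d : ℕ} {U : ℝ × (Fin d → ℝ) → ℝ} (hU : ContDiff ℝ 2 U)
    (v : ℝ × (Fin d → ℝ)) : ContDiff ℝ 1 (fun p => fderiv ℝ U p v) :=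
  (hU.fderiv_right (m := 1) (by norm_num)).clm_apply contDiff_const

theorem pd_fderiv {d : ℕ} {U : ℝ × (Fin d → ℝ) → ℝ} (hU : ContDiff ℝ 2 U)
    (v w p : ℝ × (Fin d → ℝ)) :
    fderiv ℝ (fun p => fderiv ℝ U p v) p w = fderiv ℝ (fderiv ℝ U) p w v := by
  have h : DifferentiableAt ℝ (fderiv ℝ U) p :=
    (hU.fderiv_right (m := 1) (by norm_num)).differentiable (by norm_num) p
  rw [fderiv_clm_apply h (differentiableAt_const v)]
  simp

theorem pdx_pdy {d : ℕ} (i : Fin d) {U : ℝ × (Fin d → ℝ) → ℝ} (hU : ContDiff ℝ 2 U) 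
    (p : ℝ × (Fin d → ℝ)) : pdx (pdy i U) p = pdy i (pdx U) p := by
  have hd : Differentiable ℝ U := hU.differentiable (by norm_num)
  rw [pdy_eq i hd, pdx_eq hd, pdx_eq ((pd_contDiff hU _).differentiable (by norm_num)),
    pdy_eq i ((pd_contDiff hU _).differentiable (by norm_num))]
  simp only [pd_fderiv hU]
  exact (hU.contDiffAt.isSymmSndFDerivAt (by simp)) _ _

theorem statement2 {d : ℕ} (hd : 1 ≤ d)
    (b σ c : ℝ × (Fin d → ℝ) → ℝ)
    (hb : ContDiff ℝ 1 b) (hσ : ContDiff ℝ 1 σ) (hc : ContDiff ℝ 1 c)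
    (η : (Fin d → ℝ) → Fin d → ℝ) (ζ : (Fin d → ℝ) → Fin d → Fin d → ℝ) (ρ : Fin d → ℝ)
    (U : ℝ × (Fin d → ℝ) → ℝ) (hU : ContDiff ℝ 2 U)
    (y : Fin d → ℝ) (α₁ α₂ : ℝ) (hα : α₁ ≤ α₂)
    (hPDE : ∀ z ∈ Set.Icc α₁ α₂,
      genHat b σ η ζ ρ U (z, y) + pdx b (z, y) * U (z, y) + pdx c (z, y) = 0)
    (lam : ℝ → ℝ)
    (hlam : ∀ β : ℝ, lam β = c (β, y) + U (β, y) * b (β, y)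
        + (1 / 2) * (σ (β, y)) ^ 2 * pdx U (β, y)
        + σ (β, y) * ∑ i, rzeta ζ ρ y i * pdy i U (β, y)) :
    lam α₂ - lam α₁
      = -∫ z in α₁..α₂,
          (∑ i, η y i * pdy i U (z, y)
            + (1 / 2) * ∑ i, ∑ j, amat ζ y i j * pdy i (pdy j U) (z, y)) := by
  have hUd : Differentiable ℝ U := hU.differentiable (by norm_num)
  have hbd : Differentiable ℝ b := hb.differentiable (by norm_num)
  have hσd : Differentiable ℝ σ := hσ.differentiable (by norm_num)
  have hcd : Differentiable ℝ c := hc.differentiable (by norm_num)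
  have hxC : ContDiff ℝ 1 (pdx U) := by rw [pdx_eq hUd]; exact pd_contDiff hU _
  have hyC : ∀ i, ContDiff ℝ 1 (pdy i U) := fun i => by
    rw [pdy_eq i hUd]; exact pd_contDiff hU _
  have hyyC : ∀ i j, Continuous (pdy i (pdy j U)) := fun i j => by
    rw [pdy_eq i ((hyC j).differentiable (by norm_num))]
    exact ((hyC j).continuous_fderiv (by norm_num)).clm_apply continuous_const
  have hcont : Continuous (fun z : ℝ => ∑ i, η y i * pdy i U (z, y)
      + (1 / 2) * ∑ i, ∑ j, amat ζ y i j * pdy i (pdy j U) (z, y)) := by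
    have hz : Continuous (fun z : ℝ => (z, y)) := by fun_prop
    refine Continuous.add ?_ (continuous_const.mul ?_)
    · exact continuous_finsetSum _ fun i _ =>
        continuous_const.mul ((hyC i).continuous.comp hz)
    · exact continuous_finsetSum _ fun i _ => continuous_finsetSum _ fun j _ =>
        continuous_const.mul ((hyyC i j).comp hz)
  rw [← intervalIntegral.integral_neg]
  symm
  apply intervalIntegral.integral_eq_sub_of_hasDerivAt
  · intro z hz
    rw [Set.uIcc_of_le hα] at hz
    have hP := hPDE z hz
    have hl : lam = fun β => c (β, y) + U (β, y) * b (β, y)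
        + (1 / 2) * (σ (β, y)) ^ 2 * pdx U (β, y)
        + σ (β, y) * ∑ i, rzeta ζ ρ y i * pdy i U (β, y) := funext hlam
    rw [hl]
    have hS : HasDerivAt (fun β => ∑ i, rzeta ζ ρ y i * pdy i U (β, y))
        (∑ i, rzeta ζ ρ y i * pdy i (pdx U) (z, y)) z := by
      apply HasDerivAt.fun_sum
      intro i _
      rw [← pdx_pdy i hU]
      exact (pdx_hasDerivAt' ((hyC i).differentiable (by norm_num)) z y).const_mul _
    have hσz := pdx_hasDerivAt' hσd z y
    have hD := (((pdx_hasDerivAt' hcd z y).add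
      ((pdx_hasDerivAt' hUd z y).mul (pdx_hasDerivAt' hbd z y))).add
      (((hσz.pow 2).const_mul (1 / 2)).mul
        (pdx_hasDerivAt' (hxC.differentiable (by norm_num)) z y))).add (hσz.mul hS)
    refine HasDerivAt.congr_deriv hD ?_
    simp only [genHat, add_mul, Finset.sum_add_distrib, mul_assoc, ← Finset.mul_sum] at hP
    simp only [Pi.pow_apply]
    push_cast
    linear_combination hP
  · exact hcont.neg.intervalIntegrable _ _
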